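/- arXiv:hep-lat/0305026 — 5 statements merged into one kernel-verified Lean document; each statement's English description precedes it below -/
import Mathlib

section
/- Work in the exterior algebra over ℂ⁸ with generators f_α, e_α, f′_α, e′_α (α = 1, 2). Given a 2×2 complex matrix φ and 𝔷 ∈ ℂ with complex conjugate 𝔷̄, set L = Σ_{α,β} f_α φ_{αβ} e′_β, L̄ = Σ_{α,β} f′_α (φ*)_{αβ} e_β where φ* is the conjugate transpose of φ, k = (1/4)(Σ_{α,β} ε_{αβ} f_α ∧ f_β) ∧ (Σ_{γ,δ} ε_{γδ} e′_γ ∧ e′_δ), k̄ = (1/4)(Σ_{α,β} ε_{αβ} f′_α ∧ f′_β) ∧ (Σ_{γ,δ} ε_{γδ} e_γ ∧ e_δ), l = 4 det(φ) k, and l̄ = 4 det(φ*) k̄. Then the exponential (a finite sum, since the argument is nilpotent) satisfies exp(𝔷 L + 𝔷̄ L̄) = 1 + 𝔷 L + 𝔷̄ L̄ − (1/4) 𝔷² l + 𝔷 𝔷̄ L ∧ L̄ − (1/4) 𝔷̄² l̄ − (1/4) 𝔷² 𝔷̄ l ∧ L̄ − (1/4) 𝔷 𝔷̄² l̄ ∧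 L + (1/16) 𝔷² 𝔷̄² l ∧ l̄. -/
/-!
Write `X = 𝔷 L` and `Y = 𝔷̄ L̄`. Both are even, so they commute (`bilin_commute`). Each is a
bilinear in two pairs of anticommuting generators, so its square is a multiple of the single
monomial containing all four generators, with coefficient `-2 det` (`bilin_sq`), which is
`-l / 2` for `L` and `-l̄ / 2` for `L̄` (`bilin_ι_sq`); one more factor repeats a generator, so
its cube vanishes (`bilin_ι_cube`). Hence
`exp (X + Y) = (1 + X + X² / 2) (1 + Y + Y² / 2)` (`truncated_exp`), and substituting the squares
gives the expansion.
-/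

open Matrix

noncomputable section

/-- The 2×2 antisymmetric tensor ε with ε₁₂ = 1, ε₂₁ = -1. -/
def eps : Matrix (Fin 2) (Fin 2) ℂ := !![0, 1; -1, 0]

/-- The exterior algebra over ℂ⁸ with basis relabeled f₁,f₂,e₁,e₂,f′₁,f′₂,e′₁,e′₂. -/
abbrev Ext8 := ExteriorAlgebra ℂ ((Fin 2 ⊕ Fin 2) ⊕ (Fin 2 ⊕ Fin 2) → ℂ)

/-- Generators f_α (components of ψ̄(z)). -/
def fGen (α : Fin 2) : Ext8 := ExteriorAlgebra.ι ℂ (Pi.single (Sum.inl (Sum.inl α)) 1)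

/-- Generators e_α (components of ψ(z)). -/
def eGen (α : Fin 2) : Ext8 := ExteriorAlgebra.ι ℂ (Pi.single (Sum.inl (Sum.inr α)) 1)

/-- Generators f′_α (components of ψ̄(z+1)). -/
def fGen' (α : Fin 2) : Ext8 := ExteriorAlgebra.ι ℂ (Pi.single (Sum.inr (Sum.inl α)) 1)

/-- Generators e′_α (components of ψ(z+1)). -/
def eGen' (α : Fin 2) : Ext8 := ExteriorAlgebra.ι ℂ (Pi.single (Sum.inr (Sum.inr α)) 1)

/-- L = ψ̄(z) φ ψ(z+1) = Σ φ_{αβ} f_α e′_β. -/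
def Lel (φ : Matrix (Fin 2) (Fin 2) ℂ) : Ext8 :=
  ∑ α : Fin 2, ∑ β : Fin 2, φ α β • (fGen α * eGen' β)

/-- L̄ = ψ̄(z+1) φ* ψ(z) = Σ (φ*)_{αβ} f′_α e_β. -/
def Lbarel (φ : Matrix (Fin 2) (Fin 2) ℂ) : Ext8 :=
  ∑ α : Fin 2, ∑ β : Fin 2, φ.conjTranspose α β • (fGen' α * eGen β)

/-- k = (1/4)(ψ̄ ε ψ̄)(z) (ψ ε ψ)(z+1). -/
def kel : Ext8 :=
  (1 / 4 : ℂ) • ((∑ α : Fin 2, ∑ β : Fin 2, eps α β • (fGen α * fGen β)) *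
    (∑ γ : Fin 2, ∑ δ : Fin 2, eps γ δ • (eGen' γ * eGen' δ)))

/-- k̄ = (1/4)(ψ̄ ε ψ̄)(z+1) (ψ ε ψ)(z). -/
def kbarel : Ext8 :=
  (1 / 4 : ℂ) • ((∑ α : Fin 2, ∑ β : Fin 2, eps α β • (fGen' α * fGen' β)) *
    (∑ γ : Fin 2, ∑ δ : Fin 2, eps γ δ • (eGen γ * eGen δ)))

/-- l = 4 det(φ) k. -/
def lel (φ : Matrix (Fin 2) (Fin 2) ℂ) : Ext8 := (4 * φ.det) • kel

/-- l̄ = 4 det(φ*) k̄. -/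
def lbarel (φ : Matrix (Fin 2) (Fin 2) ℂ) : Ext8 := (4 * φ.conjTranspose.det) • kbarel

section Grassmann

variable {A : Type*} [Ring A] [Algebra ℂ A]

/-- The bilinear `∑ φ_{αβ} a_α b_β`, for which `Lel` and `Lbarel` are special cases. -/
def bilin (φ : Matrix (Fin 2) (Fin 2) ℂ) (a b : Fin 2 → A) : A :=
  ∑ α : Fin 2, ∑ β : Fin 2, φ α β • (a α * b β)

/-- The square of a bilinear is, up to sign, twice the determinant times the top monomial: in
`(∑ φ_{αβ} a_α b_β)²` only the terms with distinct `a`'s and distinct `b`'s survive. -/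
lemma bilin_sq (φ : Matrix (Fin 2) (Fin 2) ℂ) (a b : Fin 2 → A)
    (ha : ∀ i, a i * a i = 0) (hb : ∀ i, b i * b i = 0)
    (haa : a 1 * a 0 = -(a 0 * a 1)) (hbb : b 1 * b 0 = -(b 0 * b 1))
    (hba : ∀ i j, b i * a j = -(a j * b i)) :
    bilin φ a b * bilin φ a b = (-2 * φ.det) • (a 0 * a 1 * (b 0 * b 1)) := by
  have key : ∀ i j k l, (a i * b j) * (a k * b l) = -((a i * a k) * (b j * b l)) := by
    intro i j k l
    calc (a i * b j) * (a k * b l) = a i * (b j * a k) * b l := by noncomm_ring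
      _ = _ := by rw [hba]; noncomm_ring
  simp only [bilin, Fin.sum_univ_two, mul_add, add_mul, smul_mul_smul_comm, key, ha, hb, haa,
    hbb, Matrix.det_fin_two, mul_zero, zero_mul, neg_mul, mul_neg]
  module

lemma top_mul_bilin (φ : Matrix (Fin 2) (Fin 2) ℂ) (a b : Fin 2 → A)
    (ha : ∀ i, a i * a i = 0) (haa : a 1 * a 0 = -(a 0 * a 1))
    (hba : ∀ i j, b i * a j = -(a j * b i)) :
    a 0 * a 1 * (b 0 * b 1) * bilin φ a b = 0 := by
  have h1 : ∀ i, a 0 * a 1 * a i = 0 := by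
    intro i
    fin_cases i
    · simp [mul_assoc, haa, ← mul_assoc (a 0) (a 0), ha]
    · simp [mul_assoc, ha]
  have key : ∀ i j, a 0 * a 1 * (b 0 * b 1) * (a i * b j) = 0 := by
    intro i j
    calc a 0 * a 1 * (b 0 * b 1) * (a i * b j)
        = a 0 * a 1 * b 0 * (b 1 * a i) * b j := by noncomm_ring
      _ = -(a 0 * a 1 * (b 0 * a i) * b 1 * b j) := by rw [hba]; noncomm_ring
      _ = a 0 * a 1 * a i * (b 0 * b 1 * b j) := by rw [hba]; noncomm_ring
      _ = 0 := by rw [h1, zero_mul]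
  simp only [bilin, Fin.sum_univ_two, mul_add, mul_smul_comm, key, smul_zero, add_zero]

/-- Truncated exponential of the sum of two commuting elements with vanishing cubes. -/
lemma truncated_exp (X Y : A) (h : Commute X Y) (hX : X ^ 3 = 0) (hY : Y ^ 3 = 0) :
    (∑ n ∈ Finset.range 5, ((n.factorial : ℂ)⁻¹) • (X + Y) ^ n) =
      1 + X + Y + (1 / 2 : ℂ) • X ^ 2 + X * Y + (1 / 2 : ℂ) • Y ^ 2
        + (1 / 2 : ℂ) • (X ^ 2 * Y) + (1 / 2 : ℂ) • (Y ^ 2 * X)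
        + (1 / 4 : ℂ) • (X ^ 2 * Y ^ 2) := by
  have hX4 : X ^ 4 = 0 := by rw [pow_succ, hX, zero_mul]
  have hY4 : Y ^ 4 = 0 := by rw [pow_succ, hY, zero_mul]
  rw [((h.pow_right 2).eq).symm]
  simp only [h.add_pow, Finset.sum_range_succ, Finset.sum_range_zero, Nat.choose, Nat.factorial,
    hX, hY, hX4, hY4, zero_mul, mul_zero, ← nsmul_eq_mul', Nat.sub_self, Nat.reduceSub, pow_zero,
    mul_one, one_mul, smul_zero, add_zero, zero_add, pow_one, smul_add, ← Nat.cast_smul_eq_nsmul ℂ]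
  push_cast
  module

end Grassmann

section Generators

variable {M : Type*} [AddCommGroup M] [Module ℂ M]

local notation "θ" => ExteriorAlgebra.ι (M := M) ℂ

lemma ι_anticomm (x y : M) : θ x * θ y = -(θ y * θ x) :=
  eq_neg_of_add_eq_zero_left (ExteriorAlgebra.ι_add_mul_swap x y)

/-- Products of two generators are even, hence commute with each other. -/
lemma ι_mul_ι_commute (x y u v : M) : Commute (θ x * θ y) (θ u * θ v) := by
  have h : ∀ w, Commute (θ x * θ y) (θ w) := fun w => by
    calc θ x * θ y * θ w = θ x * (θ y * θ w) := mul_assoc _ _ _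
      _ = -((θ x * θ w) * θ y) := by rw [ι_anticomm y w]; noncomm_ring
      _ = θ w * (θ x * θ y) := by rw [ι_anticomm x w]; noncomm_ring
  exact (h u).mul_right (h v)

lemma bilin_commute (φ χ : Matrix (Fin 2) (Fin 2) ℂ) (x y u v : Fin 2 → M) :
    Commute (bilin φ (fun i => θ (x i)) fun i => θ (y i))
      (bilin χ (fun i => θ (u i)) fun i => θ (v i)) :=
  Commute.sum_left _ _ _ fun _ _ => Commute.sum_left _ _ _ fun _ _ =>
    Commute.sum_right _ _ _ fun _ _ => Commute.sum_right _ _ _ fun _ _ =>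
      ((ι_mul_ι_commute _ _ _ _).smul_left _).smul_right _

/-- `bilin_sq` for generators, with the top monomial written as a contraction
with `eps`. -/
lemma bilin_ι_sq (φ : Matrix (Fin 2) (Fin 2) ℂ) (x y : Fin 2 → M) :
    bilin φ (fun i => θ (x i)) (fun i => θ (y i)) ^ 2 = (-(1 / 2) : ℂ) • (4 * φ.det) •
      (1 / 4 : ℂ) • ((∑ α : Fin 2, ∑ β : Fin 2, eps α β • (θ (x α) * θ (x β))) *
        (∑ γ : Fin 2, ∑ δ : Fin 2, eps γ δ • (θ (y γ) * θ (y δ)))) := by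
  rw [sq, bilin_sq φ _ _ (fun i => ExteriorAlgebra.ι_sq_zero _)
    (fun i => ExteriorAlgebra.ι_sq_zero _) (ι_anticomm _ _) (ι_anticomm _ _)
    (fun _ _ => ι_anticomm _ _)]
  simp only [eps, Fin.sum_univ_two, Matrix.of_apply, Matrix.cons_val_zero, Matrix.cons_val_one,
    Matrix.cons_val', Matrix.cons_val_fin_one, zero_smul, one_smul, neg_smul, zero_add, add_zero,
    ι_anticomm (x 1) (x 0), ι_anticomm (y 1) (y 0), neg_neg, mul_add, add_mul]
  module

lemma bilin_ι_cube (φ : Matrix (Fin 2) (Fin 2) ℂ) (x y : Fin 2 → M) :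
    bilin φ (fun i => θ (x i)) (fun i => θ (y i)) ^ 3 = 0 := by
  rw [pow_succ, sq, bilin_sq φ _ _ (fun i => ExteriorAlgebra.ι_sq_zero _)
    (fun i => ExteriorAlgebra.ι_sq_zero _) (ι_anticomm _ _) (ι_anticomm _ _)
    (fun _ _ => ι_anticomm _ _), smul_mul_assoc,
    top_mul_bilin φ _ _ (fun i => ExteriorAlgebra.ι_sq_zero _) (ι_anticomm _ _)
    (fun _ _ => ι_anticomm _ _), smul_zero]

end Generators

/-- Expansion of the one-link fermionic Boltzmann factor
exp(𝔷 L + 𝔷̄ L̄); the exponential series terminates since the argument is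
nilpotent (powers of degree ≥ 5 vanish in the exterior algebra over ℂ⁸). -/
theorem boltzmann_factor_expansion (φ : Matrix (Fin 2) (Fin 2) ℂ) (𝔷 : ℂ) :
    (∑ n ∈ Finset.range 5,
        ((n.factorial : ℂ)⁻¹) • (𝔷 • Lel φ + (starRingEnd ℂ 𝔷) • Lbarel φ) ^ n) =
      1 + 𝔷 • Lel φ + (starRingEnd ℂ 𝔷) • Lbarel φ
        - ((1 / 4 : ℂ) * 𝔷 ^ 2) • lel φ
        + (𝔷 * starRingEnd ℂ 𝔷) • (Lel φ * Lbarel φ)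
        - ((1 / 4 : ℂ) * (starRingEnd ℂ 𝔷) ^ 2) • lbarel φ
        - ((1 / 4 : ℂ) * 𝔷 ^ 2 * starRingEnd ℂ 𝔷) • (lel φ * Lbarel φ)
        - ((1 / 4 : ℂ) * 𝔷 * (starRingEnd ℂ 𝔷) ^ 2) • (lbarel φ * Lel φ)
        + ((1 / 16 : ℂ) * 𝔷 ^ 2 * (starRingEnd ℂ 𝔷) ^ 2) • (lel φ * lbarel φ) := by
  have hc : Commute (Lel φ) (Lbarel φ) := bilin_commute _ _ _ _ _ _
  have hL3 : Lel φ ^ 3 = 0 := bilin_ι_cube _ _ _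
  have hB3 : Lbarel φ ^ 3 = 0 := bilin_ι_cube _ _ _
  have hL2 : Lel φ ^ 2 = (-(1 / 2) : ℂ) • lel φ := bilin_ι_sq _ _ _
  have hB2 : Lbarel φ ^ 2 = (-(1 / 2) : ℂ) • lbarel φ := bilin_ι_sq _ _ _
  rw [truncated_exp _ _ ((hc.smul_left _).smul_right _) (by rw [smul_pow, hL3, smul_zero])
    (by rw [smul_pow, hB3, smul_zero])]
  simp only [smul_pow, hL2, hB2, smul_mul_smul_comm, smul_smul]
  module

end
end

section
/- Let M be a monoid and σ : M → M a monoid homomorphism with σ ∘ σ = id. Let x₀, y₀ ∈ M and define sequences by x_{n+1} = xₙ · σ(yₙ) · xₙ and y_{n+1} = yₙ · σ(xₙ) · yₙ. Then for every n ≥ 0, xₙ = x₀ · (σ(y₀) · x₀)^N and yₙ = y₀ · (σ(x₀) · y₀)^N, where N = (3ⁿ − 1)/2. -/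
/-!
With `a = x 0` and `b = σ (y 0)`, the involution turns `y n = y 0 * (σ (x 0) * y 0) ^ N` into
`σ (y n) = b * (a * b) ^ N`. The shift identity `(a * b) ^ N * a = a * (b * a) ^ N` then collapses
`x n * σ (y n) * x n` to `a * (b * a) ^ (3 * N + 1)`, and `N = (3 ^ n - 1) / 2` is the solution of
`N ↦ 3 * N + 1` starting from `0`. The recursion for `y` is the same with the roles exchanged, so
both formulas are proved by one simultaneous induction.
-/

theorem alternating_word_mul {M : Type*} [Monoid M] (a b : M) (N : ℕ) :
    a * (b * a) ^ N * (b * (a * b) ^ N) * (a * (b * a) ^ N) = a * (b * a) ^ (3 * N + 1) := by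
  have key : b * (a * b) ^ N * (a * (b * a) ^ N) = (b * a) ^ (N + 1 + N) := by
    calc b * (a * b) ^ N * (a * (b * a) ^ N)
        = b * ((a * b) ^ N * a) * (b * a) ^ N := by simp only [mul_assoc]
      _ = (b * a) * (b * a) ^ N * (b * a) ^ N := by rw [mul_pow_mul]; simp only [mul_assoc]
      _ = (b * a) ^ (N + 1 + N) := by rw [← pow_succ', ← pow_add]
  rw [mul_assoc, key, mul_assoc, ← pow_add]
  congr 2
  omega

theorem rg_exponent_succ (n : ℕ) : (3 ^ (n + 1) - 1) / 2 = 3 * ((3 ^ n - 1) / 2) + 1 := by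
  -- Parity of `3 ^ n` makes the natural-number division by `2` exact.
  have hodd : 3 ^ n % 2 = 1 := by simp [Nat.pow_mod]
  rw [pow_succ]
  omega

/-- Solution of the RG flow equations: if x_{n+1} = xₙ σ(yₙ) xₙ and
y_{n+1} = yₙ σ(xₙ) yₙ in a monoid with involutive homomorphism σ, then
xₙ = x₀ (σ(y₀) x₀)^N and yₙ = y₀ (σ(x₀) y₀)^N with N = (3ⁿ - 1)/2. -/
theorem rg_flow_solution {M : Type*} [Monoid M] (σ : M →* M)
    (hσ : ∀ m, σ (σ m) = m) (x y : ℕ → M)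
    (hx : ∀ n, x (n + 1) = x n * σ (y n) * x n)
    (hy : ∀ n, y (n + 1) = y n * σ (x n) * y n) :
    ∀ n : ℕ, x n = x 0 * (σ (y 0) * x 0) ^ ((3 ^ n - 1) / 2) ∧
      y n = y 0 * (σ (x 0) * y 0) ^ ((3 ^ n - 1) / 2) := by
  intro n
  induction n with
  | zero => simp
  | succ n ih =>
    obtain ⟨ihx, ihy⟩ := ih
    rw [rg_exponent_succ]
    constructor
    · rw [hx, ihy, ihx, map_mul, map_pow, map_mul, hσ, alternating_word_mul]
    · rw [hy, ihx, ihy, map_mul, map_pow, map_mul, hσ, alternating_word_mul]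
end

section
/- Let g : ℝ → ℝ be even and continuous, and suppose that η ↦ sinh(η) g(η) and η ↦ η sinh(η) g(η) are integrable on ℝ. For ρ ≠ 0 define the spherical transform b(ρ) = (2/ρ) ∫_ℝ sinh(η) g(η) sin(ηρ/2) dη. If the function ρ ↦ ρ b(ρ) is integrable on ℝ, then for every η ∈ ℝ the inversion formula holds: sinh(η) g(η) = (1/(8π)) ∫_ℝ ρ b(ρ) sin(ηρ/2) dρ. -/
/-!
Put `h η = sinh η * g η` and `S ρ = ∫ h η sin (η ρ / 2) dη`. Then `ρ * b ρ = 2 * S ρ` for every `ρ`,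
both sides vanishing at `ρ = 0`. Since `h` is odd, its Fourier transform, in the normalisation
`∫ exp (-2 π i v w) h v dv`, is purely imaginary: `𝓕 h w = -i S (4 π w)` (`fourier_ofReal_of_odd`).
It is integrable because `ρ * b ρ` is, so the Fourier inversion theorem for continuous functions
applies. Its real part reads `h η = ∫ S (4 π w) sin (2 π w η) dw`, and the substitution `ρ = 4 π w`
gives the factor `1 / (8 π)`.
-/

open MeasureTheory

open scoped FourierTransform

/-- The Fourier transform of an odd integrable real function is `-i` times its sine transform:
the cosine part integrates to zero. -/
lemma fourier_ofReal_of_odd (h : ℝ → ℝ) (hodd : ∀ x, h (-x) = -h x) (hi : Integrable h) (w : ℝ) :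
    𝓕 (fun x => (h x : ℂ)) w =
      -Complex.I * ((∫ x : ℝ, h x * Real.sin (x * (4 * Real.pi * w) / 2) : ℝ) : ℂ) := by
  have hc : Integrable (fun x => h x * Real.cos (x * (4 * Real.pi * w) / 2)) :=
    hi.mul_bdd (c := 1) (by fun_prop)
      (Filter.Eventually.of_forall fun x => Real.abs_cos_le_one _)
  have hs : Integrable (fun x => h x * Real.sin (x * (4 * Real.pi * w) / 2)) :=
    hi.mul_bdd (c := 1) (by fun_prop)
      (Filter.Eventually.of_forall fun x => Real.abs_sin_le_one _)
  have hc0 : ∫ x : ℝ, h x * Real.cos (x * (4 * Real.pi * w) / 2) = 0 := by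
    have h1 := integral_neg_eq_self
      (fun x : ℝ => h x * Real.cos (x * (4 * Real.pi * w) / 2)) volume
    simp only [hodd, neg_mul, neg_div, Real.cos_neg, integral_neg] at h1
    linarith
  rw [Real.fourier_real_eq_integral_exp_smul]
  have hpt : ∀ x : ℝ, Complex.exp (((-2 * Real.pi * x * w : ℝ) : ℂ) * Complex.I) • (h x : ℂ) =
      ((h x * Real.cos (x * (4 * Real.pi * w) / 2) : ℝ) : ℂ) -
        Complex.I * ((h x * Real.sin (x * (4 * Real.pi * w) / 2) : ℝ) : ℂ) := by
    intro x
    rw [show -2 * Real.pi * x * w = -(x * (4 * Real.pi * w) / 2) by ring, Complex.exp_mul_I,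
      ← Complex.ofReal_cos, ← Complex.ofReal_sin, Real.cos_neg, Real.sin_neg, smul_eq_mul]
    push_cast
    ring
  simp_rw [hpt]
  rw [integral_sub hc.ofReal (hs.ofReal.const_mul _), integral_const_mul, integral_complex_ofReal,
    integral_complex_ofReal, hc0]
  simp

/-- Inversion formula for the spherical (principal series) transform of an
SU(2)-biinvariant function on SL(2,ℂ), written in the coordinate η:
if b(ρ) = (2/ρ) ∫ sinh(η) g(η) sin(ηρ/2) dη and ρ b(ρ) is integrable, then
sinh(η) g(η) = (1/(8π)) ∫ ρ b(ρ) sin(ηρ/2) dρ. -/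
theorem spherical_inversion
    (g : ℝ → ℝ) (heven : ∀ η, g (-η) = g η) (hcont : Continuous g)
    (hint1 : Integrable (fun η => Real.sinh η * g η))
    (hint2 : Integrable (fun η => η * Real.sinh η * g η))
    (b : ℝ → ℝ)
    (hb : ∀ ρ : ℝ, ρ ≠ 0 →
      b ρ = (2 / ρ) * ∫ η : ℝ, Real.sinh η * g η * Real.sin (η * ρ / 2))
    (hbint : Integrable (fun ρ => ρ * b ρ)) :
    ∀ η : ℝ, Real.sinh η * g η =
      (1 / (8 * Real.pi)) * ∫ ρ : ℝ, ρ * b ρ * Real.sin (η * ρ / 2) := by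
  intro η
  have hpi := Real.pi_pos
  have hS : ∀ ρ : ℝ,
      ∫ η : ℝ, Real.sinh η * g η * Real.sin (η * ρ / 2) = ρ * b ρ / 2 := by
    intro ρ
    rcases eq_or_ne ρ 0 with rfl | hρ
    · simp
    · rw [hb ρ hρ]
      generalize ∫ η : ℝ, Real.sinh η * g η * Real.sin (η * ρ / 2) = J
      field_simp
  have hF : 𝓕 (fun x : ℝ => ((Real.sinh x * g x : ℝ) : ℂ)) =
      fun w : ℝ => -Complex.I * (((4 * Real.pi * w) * b (4 * Real.pi * w) / 2 : ℝ) : ℂ) := by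
    funext w
    rw [fourier_ofReal_of_odd _ (fun x => by simp [heven]) hint1, hS]
  have hscaled : Integrable (fun w : ℝ => (4 * Real.pi * w) * b (4 * Real.pi * w)) :=
    hbint.comp_mul_left' (by positivity)
  have hFi : Integrable (𝓕 (fun x : ℝ => ((Real.sinh x * g x : ℝ) : ℂ))) := by
    rw [hF]
    exact (hscaled.div_const 2).ofReal.const_mul _
  have hinv := congrFun (Continuous.fourierInv_fourier_eq
    (f := fun x : ℝ => ((Real.sinh x * g x : ℝ) : ℂ))
    (Complex.continuous_ofReal.comp (Real.continuous_sinh.mul hcont)) hint1.ofReal hFi) η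
  rw [hF, Real.fourierInv_eq'] at hinv
  have hpt : ∀ w : ℝ, Complex.exp (((2 * Real.pi * inner ℝ w η : ℝ) : ℂ) * Complex.I) •
      (-Complex.I * (((4 * Real.pi * w) * b (4 * Real.pi * w) / 2 : ℝ) : ℂ)) =
      (((4 * Real.pi * w) * b (4 * Real.pi * w) / 2 *
        Real.sin (η * (4 * Real.pi * w) / 2) : ℝ) : ℂ) - Complex.I *
      (((4 * Real.pi * w) * b (4 * Real.pi * w) / 2 *
        Real.cos (η * (4 * Real.pi * w) / 2) : ℝ) : ℂ) := by
    intro w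
    rw [show 2 * Real.pi * inner ℝ w η = η * (4 * Real.pi * w) / 2 by
      simp only [RCLike.inner_apply, conj_trivial]; ring, Complex.exp_mul_I,
      ← Complex.ofReal_cos, ← Complex.ofReal_sin, smul_eq_mul]
    push_cast
    linear_combination (-(4 * Real.pi * w * b (4 * Real.pi * w) / 2 *
      Complex.sin (η * (4 * Real.pi * w) / 2) : ℂ)) * Complex.I_sq
  simp_rw [hpt] at hinv
  have hs : Integrable (fun w : ℝ => (4 * Real.pi * w) * b (4 * Real.pi * w) / 2 *
      Real.sin (η * (4 * Real.pi * w) / 2)) :=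
    (hscaled.div_const 2).mul_bdd (c := 1) (by fun_prop)
      (Filter.Eventually.of_forall fun x => Real.abs_sin_le_one _)
  have hc : Integrable (fun w : ℝ => (4 * Real.pi * w) * b (4 * Real.pi * w) / 2 *
      Real.cos (η * (4 * Real.pi * w) / 2)) :=
    (hscaled.div_const 2).mul_bdd (c := 1) (by fun_prop)
      (Filter.Eventually.of_forall fun x => Real.abs_cos_le_one _)
  rw [integral_sub hs.ofReal (hc.ofReal.const_mul _), integral_const_mul, integral_complex_ofReal,
    integral_complex_ofReal] at hinv
  have hre := congrArg Complex.re hinv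
  simp only [Complex.sub_re, Complex.ofReal_re, Complex.re_mul_ofReal, Complex.I_re, zero_mul,
    sub_zero] at hre
  rw [← hre, Measure.integral_comp_mul_left
    (fun ρ : ℝ => ρ * b ρ / 2 * Real.sin (η * ρ / 2)) (4 * Real.pi),
    abs_of_pos (by positivity), smul_eq_mul]
  simp_rw [div_mul_eq_mul_div _ (2 : ℝ)]
  rw [integral_div]
  generalize ∫ ρ : ℝ, ρ * b ρ * Real.sin (η * ρ / 2) = J
  field_simp
  ring
end

section
/- Let g : ℝ → ℝ be measurable, even, with g(η) ≥ 0 for almost every η, and normalized so that ∫_ℝ η sinh(η) g(η) dη = 1. Then for every real ρ ≠ 0 the spherical transform b(ρ) = (2/ρ) ∫_ℝ sinh(η) g(η) sin(ηρ/2) dη is well defined (the integrand is absolutely integrable) and satisfies |b(ρ)| < 1. -/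
open MeasureTheory

/-!
Since `|sin x| ≤ |x|` with equality only at `x = 0`, the integrand `(2/ρ) sinh η g(η) sin(ηρ/2)` of
`b(ρ)` is dominated in absolute value by the density `η sinh η g(η)`, which is nonnegative almost
everywhere and has integral `1`. This gives integrability and `|b(ρ)| ≤ 1`. Equality would force
the two sides of the pointwise bound to agree almost everywhere; at such a point `η = 0` or
`g η = 0`, so the density would vanish almost everywhere, contradicting its normalization.
-/

theorem mul_sinh_eq_abs (η : ℝ) : η * Real.sinh η = |η| * |Real.sinh η| := by
  rw [← abs_mul, abs_of_nonneg]
  rcases le_total 0 η with h | h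
  · exact mul_nonneg h (Real.sinh_nonneg_iff.2 h)
  · exact mul_nonneg_of_nonpos_of_nonpos h (Real.sinh_nonpos_iff.2 h)

theorem abs_two_div_mul_sin_lt {ρ η : ℝ} (hρ : ρ ≠ 0) (hη : η ≠ 0) :
    |2 / ρ| * |Real.sin (η * ρ / 2)| < |η| := by
  have hx : η * ρ / 2 ≠ 0 := by positivity
  have h : |Real.sin (η * ρ / 2)| < |η * ρ / 2| := sq_lt_sq.1 (Real.sin_sq_lt_sq hx)
  have hc : 0 < |2 / ρ| := by positivity
  calc |2 / ρ| * |Real.sin (η * ρ / 2)| < |2 / ρ| * |η * ρ / 2| := by gcongr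
    _ = |η| := by
      rw [← abs_mul]
      congr 1
      field_simp

theorem abs_integrand_le {ρ η a : ℝ} (hρ : ρ ≠ 0) (ha : 0 ≤ a) :
    |(2 / ρ) * (Real.sinh η * a * Real.sin (η * ρ / 2))| ≤ η * Real.sinh η * a := by
  rcases eq_or_ne η 0 with rfl | hη
  · simp
  · rw [mul_sinh_eq_abs, abs_mul, abs_mul, abs_mul, abs_of_nonneg ha]
    calc |2 / ρ| * (|Real.sinh η| * a * |Real.sin (η * ρ / 2)|)
        = (|2 / ρ| * |Real.sin (η * ρ / 2)|) * (|Real.sinh η| * a) := by ring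
      _ ≤ |η| * (|Real.sinh η| * a) := by
          gcongr
          exact (abs_two_div_mul_sin_lt hρ hη).le
      _ = |η| * |Real.sinh η| * a := by ring

/-- The equality case of `abs_integrand_le`. -/
theorem density_eq_zero_of_eq {ρ η a : ℝ} (hρ : ρ ≠ 0) (ha : 0 ≤ a)
    (h : |(2 / ρ) * (Real.sinh η * a * Real.sin (η * ρ / 2))| = η * Real.sinh η * a) :
    η * Real.sinh η * a = 0 := by
  by_contra hne
  have hη : η ≠ 0 := by rintro rfl; simp at hne
  have hp : 0 < |Real.sinh η| * a := by
    refine lt_of_le_of_ne (by positivity) fun h0 => hne ?_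
    rw [mul_sinh_eq_abs, mul_assoc, ← h0, mul_zero]
  have hlt := mul_lt_mul_of_pos_right (abs_two_div_mul_sin_lt hρ hη) hp
  rw [mul_sinh_eq_abs, abs_mul, abs_mul, abs_mul, abs_of_nonneg ha] at h
  linarith

/-- Unique-absolute-maximum property of the spherical transform on SL(2,ℂ):
for a nonnegative even g with ∫ η sinh(η) g(η) dη = 1 and every ρ ≠ 0, the
spherical transform b(ρ) = (2/ρ) ∫ sinh(η) g(η) sin(ηρ/2) dη is well defined
and satisfies |b(ρ)| < 1. -/
theorem spherical_transform_unique_maximum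
    (g : ℝ → ℝ) (hmeas : Measurable g) (heven : ∀ η, g (-η) = g η)
    (hpos : ∀ᵐ η : ℝ, 0 ≤ g η)
    (hnorm : (∫ η : ℝ, η * Real.sinh η * g η) = 1) :
    ∀ ρ : ℝ, ρ ≠ 0 →
      Integrable (fun η => Real.sinh η * g η * Real.sin (η * ρ / 2)) ∧
      |(2 / ρ) * ∫ η : ℝ, Real.sinh η * g η * Real.sin (η * ρ / 2)| < 1 := by
  intro ρ hρ
  -- A non-integrable density would have Bochner integral `0`.
  have hint : Integrable (fun η : ℝ => η * Real.sinh η * g η) := by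
    by_contra h
    rw [integral_undef h] at hnorm
    exact zero_ne_one hnorm
  have hle : ∀ᵐ η : ℝ, |(2 / ρ) * (Real.sinh η * g η * Real.sin (η * ρ / 2))|
      ≤ η * Real.sinh η * g η := hpos.mono fun η h => abs_integrand_le hρ h
  have hF : Integrable (fun η => (2 / ρ) * (Real.sinh η * g η * Real.sin (η * ρ / 2))) := by
    refine hint.mono' (Measurable.aestronglyMeasurable ?_) hle
    have := Real.measurable_sinh
    fun_prop
  have hc : 2 / ρ ≠ 0 := by positivity
  refine ⟨(integrable_const_mul_iff (IsUnit.mk0 _ hc) _).1 hF, ?_⟩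
  rw [← integral_const_mul]
  refine lt_of_le_of_lt abs_integral_le_integral_abs ?_
  rw [← hnorm]
  refine lt_of_le_of_ne (integral_mono_ae hF.abs hint hle) fun heq => ?_
  have hae := (integral_eq_iff_of_ae_le hF.abs hint hle).1 heq
  have hzero : (fun η : ℝ => η * Real.sinh η * g η) =ᵐ[volume] 0 := by
    filter_upwards [hae, hpos] with η h1 h2
    exact density_eq_zero_of_eq hρ h2 h1
  rw [integral_eq_zero_of_ae hzero] at hnorm
  exact zero_ne_one hnorm
end

section
/- Let μ_K be the normalized Haar probability measure on the compact group SU(2) and let λ be the measure on ℝ with density sinh²(η) with respect to Lebesgue measure. Let Φ : SU(2) × ℝ × SU(2) → SL(2,ℂ) be the map Φ(u₁, η, u₂) = u₁ d(η) u₂. Then the pushforward measure ν = Φ_*(μ_K ⊗ λ ⊗ μ_K) on SL(2,ℂ) is left-invariant: ν(g S) = ν(S) for every g ∈ SL(2,ℂ) and every Borel set S ⊆ SL(2,ℂ); i.e., ν is a Haar measure on SL(2,ℂ). -/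
open Matrix MeasureTheory

noncomputable section

instance : MeasurableSpace (Matrix (Fin 2) (Fin 2) ℂ) := borel _

instance : BorelSpace (Matrix (Fin 2) (Fin 2) ℂ) := ⟨rfl⟩

/-- The group SU(2) of 2×2 complex unitary matrices of determinant 1,
as a set of matrices. -/
def SU2 : Set (Matrix (Fin 2) (Fin 2) ℂ) :=
  {u | u * u.conjTranspose = 1 ∧ u.det = 1}

/-- For η ∈ ℝ, the diagonal matrix d(η) = diag(e^{-η/2}, e^{η/2}). -/
def dEta (η : ℝ) : Matrix (Fin 2) (Fin 2) ℂ :=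
  !![Complex.exp (-(η : ℂ) / 2), 0; 0, Complex.exp ((η : ℂ) / 2)]

/-!
The proof produces the Haar measure of `SL(2,ℂ)` in coordinates in which its left invariance is
obvious, and then rewrites it in Cartan coordinates.

A matrix `[v | w]` of determinant `1` is determined by its first column `v ∈ ℂ² \ {0}` and by the
position `t ∈ ℂ` of `w` on the affine line `{w | det [v | w] = 1}`, whose direction is `v`; this is
`frame v t`. Left multiplication by `g` acts by `v ↦ g v`, which preserves Lebesgue measure because
its real determinant is `|det g|² = 1`, and by a translation of `t` depending on `v`. So the image
of Lebesgue measure on `ℂ² × ℂ` is left-invariant (`lintegral_frame_mul_left`), and it remains so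
after averaging over right translations by `SU(2)`.

Since that measure is also invariant under `SU(2)` on the left, the integral of `f` equals that of
its two-sided average `biAverage`. By the Cartan decomposition (`exists_cartan`), that average is
a function of `‖x‖² = tr (xᴴ x)`, and `‖d(η)‖² = 2 cosh η`. Hence only the law of `‖x‖²` is needed
(`lintegral_hsq_frame`). Here `‖frame v t‖² = a + a⁻¹ + a b` with `a = |v|²` and `b = |t|²`, which
have densities proportional to `a da` and `db`; so `s = ‖x‖²` has density proportional to the
length of `{a > 0 | a + a⁻¹ < s}`, which is `2 sinh η` for `s = 2 cosh η`. With `ds = 2 sinh η dη`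
this gives `sinh² η dη`, and therefore the left-invariant measure is `2 π³ ν`.
-/

/-! ### Algebra in SL(2,ℂ) -/

/-- The squared Hilbert–Schmidt norm of a matrix. -/
def hsq (x : Matrix (Fin 2) (Fin 2) ℂ) : ℝ := (xᴴ * x).trace.re

lemma SU2.conjTranspose_mul {u : Matrix (Fin 2) (Fin 2) ℂ} (hu : u ∈ SU2) : uᴴ * u = 1 :=
  mul_eq_one_comm.mp hu.1

lemma SU2.conjTranspose_mem {u : Matrix (Fin 2) (Fin 2) ℂ} (hu : u ∈ SU2) : uᴴ ∈ SU2 :=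
  ⟨by rw [conjTranspose_conjTranspose]; exact SU2.conjTranspose_mul hu,
    by rw [det_conjTranspose, hu.2, star_one]⟩

lemma det_dEta (η : ℝ) : (dEta η).det = 1 := by
  rw [dEta, det_fin_two_of, ← Complex.exp_add]
  simp [neg_div]

lemma dEta_mul_neg (η : ℝ) : dEta η * dEta (-η) = 1 := by
  ext i j
  fin_cases i <;> fin_cases j <;> simp [dEta, Matrix.mul_apply, ← Complex.exp_add, neg_div]

lemma dEta_neg_mul (η : ℝ) : dEta (-η) * dEta η = 1 := mul_eq_one_comm.mp (dEta_mul_neg η)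

lemma dEta_conjTranspose (η : ℝ) : (dEta η)ᴴ = dEta η := by
  ext i j
  fin_cases i <;> fin_cases j <;> 
    simp [dEta, Matrix.conjTranspose_apply, ← Complex.exp_conj, Complex.conj_ofNat]

lemma dEta_mul_self (η : ℝ) :
    dEta η * dEta η = diagonal ![(Real.exp (-η) : ℂ), (Real.exp η : ℂ)] := by
  ext i j
  fin_cases i <;> fin_cases j <;> simp [dEta, Matrix.mul_apply, ← Complex.exp_add]

lemma hsq_dEta (η : ℝ) : hsq (dEta η) = 2 * Real.cosh η := by
  rw [hsq, dEta_conjTranspose, dEta_mul_self, trace_diagonal, Fin.sum_univ_two, Real.cosh_eq]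
  simp only [cons_val_zero, cons_val_one, Complex.add_re, Complex.ofReal_re]
  ring

lemma hsq_unitary_mul_mul {u v : Matrix (Fin 2) (Fin 2) ℂ} (hu : u ∈ SU2) (hv : v ∈ SU2)
    (x : Matrix (Fin 2) (Fin 2) ℂ) : hsq (u * x * v) = hsq x := by
  have h : (u * x * v)ᴴ * (u * x * v) = vᴴ * (xᴴ * x) * v := by
    rw [conjTranspose_mul, conjTranspose_mul]
    calc vᴴ * (xᴴ * uᴴ) * (u * x * v) = vᴴ * (xᴴ * (uᴴ * u) * x) * v := by noncomm_ring
      _ = _ := by rw [SU2.conjTranspose_mul hu, mul_one]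
  rw [hsq, h, trace_mul_cycle, hv.1, one_mul, hsq]

/-- The Weyl element of `SU(2)` conjugates `d(η)` to `d(-η)`. -/
lemma exists_weyl (η : ℝ) : ∃ u ∈ SU2, ∃ v ∈ SU2, dEta (-η) = u * dEta η * v := by
  refine ⟨!![0, 1; -1, 0], ⟨?_, ?_⟩, !![0, -1; 1, 0], ⟨?_, ?_⟩, ?_⟩
  · ext i j
    fin_cases i <;> fin_cases j <;> simp [Matrix.mul_apply]
  · simp [det_fin_two_of]
  · ext i j
    fin_cases i <;> fin_cases j <;> simp [Matrix.mul_apply]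
  · simp [det_fin_two_of]
  · ext i j
    fin_cases i <;> fin_cases j <;> simp [dEta, Matrix.mul_apply]

/-- Diagonalisation of a Hermitian matrix by an element of `SU(2)`: the phase of the determinant
of the unitary eigenvector matrix is absorbed in one of the eigenvectors. -/
lemma exists_SU2_diagonalization {A : Matrix (Fin 2) (Fin 2) ℂ} (hA : A.IsHermitian) :
    ∃ V ∈ SU2, A = V * diagonal (RCLike.ofReal ∘ hA.eigenvalues) * Vᴴ := by
  set U : Matrix (Fin 2) (Fin 2) ℂ := (hA.eigenvectorUnitary : Matrix (Fin 2) (Fin 2) ℂ) with hU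
  have hUU : U * Uᴴ = 1 := Unitary.coe_mul_star_self hA.eigenvectorUnitary
  have hspec : A = U * diagonal (RCLike.ofReal ∘ hA.eigenvalues) * Uᴴ := by
    conv_lhs => rw [hA.spectral_theorem, Unitary.conjStarAlgAut_apply]
    rfl
  have hdet : U.det * star U.det = 1 := by
    rw [← det_conjTranspose, ← det_mul, hUU, det_one]
  set P : Matrix (Fin 2) (Fin 2) ℂ := diagonal ![1, star U.det] with hP
  have hPP : P * Pᴴ = 1 := by
    rw [hP, diagonal_conjTranspose, diagonal_mul_diagonal, ← diagonal_one]
    congr 1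
    ext i
    fin_cases i
    · simp
    · simpa [mul_comm] using hdet
  have hPD : P * diagonal (RCLike.ofReal ∘ hA.eigenvalues) * Pᴴ
      = diagonal (RCLike.ofReal ∘ hA.eigenvalues) := by
    have hc : P * diagonal (RCLike.ofReal ∘ hA.eigenvalues)
        = diagonal (RCLike.ofReal ∘ hA.eigenvalues) * P := by
      rw [hP, diagonal_mul_diagonal, diagonal_mul_diagonal]
      simp only [mul_comm]
    rw [hc, mul_assoc, hPP, mul_one]
  refine ⟨U * P, ⟨?_, ?_⟩, ?_⟩
  · rw [conjTranspose_mul]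
    calc U * P * (Pᴴ * Uᴴ) = U * (P * Pᴴ) * Uᴴ := by noncomm_ring
      _ = 1 := by rw [hPP, mul_one, hUU]
  · rw [det_mul, hP, det_diagonal, Fin.prod_univ_two]
    simpa using hdet
  · rw [conjTranspose_mul]
    calc A = U * diagonal (RCLike.ofReal ∘ hA.eigenvalues) * Uᴴ := hspec
      _ = U * (P * diagonal (RCLike.ofReal ∘ hA.eigenvalues) * Pᴴ) * Uᴴ := by rw [hPD]
      _ = _ := by noncomm_ring

open scoped ComplexOrder in
/-- The Cartan decomposition `SL(2,ℂ) = K A K`. -/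
lemma exists_cartan {x : Matrix (Fin 2) (Fin 2) ℂ} (hx : x.det = 1) :
    ∃ u ∈ SU2, ∃ η : ℝ, ∃ v ∈ SU2, x = u * dEta η * v := by
  have hpos := posSemidef_conjTranspose_mul_self x
  obtain ⟨V, hV, hspec⟩ := exists_SU2_diagonalization hpos.isHermitian
  set lam := hpos.isHermitian.eigenvalues with hlam
  have hVV := SU2.conjTranspose_mul hV
  have hprod : lam 0 * lam 1 = 1 := by
    have h := hpos.isHermitian.det_eq_prod_eigenvalues
    rw [det_mul, det_conjTranspose, hx, Fin.prod_univ_two] at h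
    simp only [star_one, mul_one] at h
    have h' : ((lam 0 * lam 1 : ℝ) : ℂ) = 1 := by
      rw [Complex.ofReal_mul]; exact h.symm
    exact_mod_cast h'
  have h0 : 0 < lam 0 := by
    refine lt_of_le_of_ne (hpos.eigenvalues_nonneg 0) fun h => ?_
    rw [← h, zero_mul] at hprod
    exact zero_ne_one hprod
  have h1 : lam 1 = (lam 0)⁻¹ := eq_inv_of_mul_eq_one_right hprod
  set η := -Real.log (lam 0) with hη
  have hD : diagonal (RCLike.ofReal ∘ lam) = dEta η * dEta η := by
    rw [dEta_mul_self]
    congr 1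
    ext i
    fin_cases i
    · simp [hη, Real.exp_log h0]
    · simp [hη, Real.exp_neg, Real.exp_log h0, h1]
  refine ⟨x * V * dEta (-η), ⟨mul_eq_one_comm.mp ?_, ?_⟩, η, Vᴴ, SU2.conjTranspose_mem hV, ?_⟩
  · rw [conjTranspose_mul, conjTranspose_mul, dEta_conjTranspose]
    calc dEta (-η) * (Vᴴ * xᴴ) * (x * V * dEta (-η))
        = dEta (-η) * Vᴴ * (xᴴ * x) * V * dEta (-η) := by noncomm_ring
      _ = dEta (-η) * (Vᴴ * V) * (dEta η * dEta η) * (Vᴴ * V) * dEta (-η) := by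
          rw [hspec, hD]; noncomm_ring
      _ = (dEta (-η) * dEta η) * (dEta η * dEta (-η)) := by rw [hVV]; noncomm_ring
      _ = 1 := by rw [dEta_mul_neg, dEta_neg_mul, one_mul]
  · rw [det_mul, det_mul, hx, hV.2, det_dEta]; norm_num
  · calc x = x * (V * Vᴴ) := by rw [hV.1, mul_one]
      _ = x * V * (dEta (-η) * dEta η) * Vᴴ := by rw [dEta_neg_mul]; noncomm_ring
      _ = _ := by noncomm_ring

/-- The element of `SL(2,ℂ)` with first column `v ≠ 0` whose second column is the
`t`-th point of the affine line `{w | det [v | w] = 1}`, measured from its point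
`(-conj v₁, conj v₀) / |v|²` nearest to the origin. -/
def frame (v : Fin 2 → ℂ) (t : ℂ) : Matrix (Fin 2) (Fin 2) ℂ :=
  !![v 0, -star (v 1) / (Complex.normSq (v 0) + Complex.normSq (v 1) : ℝ) + t * v 0;
     v 1, star (v 0) / (Complex.normSq (v 0) + Complex.normSq (v 1) : ℝ) + t * v 1]

lemma normSq_pos_of_ne {v : Fin 2 → ℂ} (hv : v ≠ 0) :
    0 < Complex.normSq (v 0) + Complex.normSq (v 1) := by
  refine lt_of_le_of_ne (add_nonneg (Complex.normSq_nonneg _) (Complex.normSq_nonneg _))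
    fun h => hv ?_
  have h0 := Complex.normSq_nonneg (v 0)
  have h1 := Complex.normSq_nonneg (v 1)
  ext i
  fin_cases i
  · exact Complex.normSq_eq_zero.mp (show Complex.normSq (v 0) = 0 by linarith)
  · exact Complex.normSq_eq_zero.mp (show Complex.normSq (v 1) = 0 by linarith)

lemma det_frame {v : Fin 2 → ℂ} (hv : v ≠ 0) (t : ℂ) : (frame v t).det = 1 := by
  have h : ((Complex.normSq (v 0) + Complex.normSq (v 1) : ℝ) : ℂ) ≠ 0 :=
    Complex.ofReal_ne_zero.mpr (normSq_pos_of_ne hv).ne'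
  rw [frame, det_fin_two_of]
  field_simp
  push_cast
  rw [← Complex.mul_conj, ← Complex.mul_conj]
  simp only [Complex.star_def]
  ring

lemma hsq_frame {v : Fin 2 → ℂ} (hv : v ≠ 0) (t : ℂ) :
    hsq (frame v t) = (Complex.normSq (v 0) + Complex.normSq (v 1))
      + (Complex.normSq (v 0) + Complex.normSq (v 1))⁻¹
      + (Complex.normSq (v 0) + Complex.normSq (v 1)) * Complex.normSq t := by
  have h := (normSq_pos_of_ne hv).ne'
  set r := Complex.normSq (v 0) + Complex.normSq (v 1) with hr
  have hns : hsq (frame v t) = r +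
      (Complex.normSq (-star (v 1) / (r : ℂ) + t * v 0)
        + Complex.normSq (star (v 0) / (r : ℂ) + t * v 1)) := by
    rw [hsq, trace_fin_two, Complex.add_re, mul_apply, mul_apply, Fin.sum_univ_two,
      Fin.sum_univ_two]
    simp only [conjTranspose_apply, frame, ← hr, of_apply, cons_val', cons_val_zero, cons_val_one,
      cons_val_fin_one]
    simp only [Complex.star_def, ← Complex.normSq_eq_conj_mul_self, Complex.add_re,
      Complex.ofReal_re]
    rw [← hr]
  rw [hns, Complex.normSq_add, Complex.normSq_add, Complex.normSq_div, Complex.normSq_div,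
    Complex.normSq_neg, Complex.star_def, Complex.normSq_conj,
    Complex.normSq_conj, Complex.normSq_ofReal, Complex.normSq_mul, Complex.normSq_mul]
  -- the cross terms cancel because the nearest point is orthogonal to `v`
  have hcross : (-(starRingEnd ℂ) (v 1) / (r : ℂ) * (starRingEnd ℂ) (t * v 0)).re
      + ((starRingEnd ℂ) (v 0) / (r : ℂ) * (starRingEnd ℂ) (t * v 1)).re = 0 := by
    rw [← Complex.add_re, map_mul, map_mul]
    have : -(starRingEnd ℂ) (v 1) / (r : ℂ) * ((starRingEnd ℂ) t * (starRingEnd ℂ) (v 0))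
      + (starRingEnd ℂ) (v 0) / (r : ℂ) * ((starRingEnd ℂ) t * (starRingEnd ℂ) (v 1)) = 0 := by
      ring
    rw [this, Complex.zero_re]
  have hinv : r⁻¹ = (Complex.normSq (v 1) + Complex.normSq (v 0)) / (r * r) := by
    rw [add_comm (Complex.normSq (v 1)), ← hr]
    field_simp
  rw [hinv]
  linear_combination 2 * hcross - Complex.normSq t * hr

/-- Left multiplication by `g ∈ SL(2,ℂ)` acts on `frame v t` linearly on `v` and by a translation
on `t`. -/
lemma exists_mul_frame {g : Matrix (Fin 2) (Fin 2) ℂ} (hg : g.det = 1) {v : Fin 2 → ℂ}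
    (hv : v ≠ 0) : ∃ c : ℂ, ∀ t, g * frame v t = frame (g *ᵥ v) (t + c) := by
  have hw : g *ᵥ v ≠ 0 := fun h =>
    hv (eq_zero_of_mulVec_eq_zero (by rw [hg]; exact one_ne_zero) h)
  set w := g *ᵥ v with hwdef
  set y : Fin 2 → ℂ := fun i => (g * frame v 0) i 1 with hy
  have hcol : ∀ i, (g * frame v 0) i 0 = w i := by
    intro i
    fin_cases i <;> simp [hwdef, mul_apply, frame]
  have hdet : w 0 * y 1 - y 0 * w 1 = 1 := by
    have h : (g * frame v 0).det = 1 := by rw [det_mul, hg, det_frame hv, one_mul]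
    rw [det_fin_two, hcol, hcol] at h
    exact h
  have hR : ((Complex.normSq (w 0) + Complex.normSq (w 1) : ℝ) : ℂ) ≠ 0 :=
    Complex.ofReal_ne_zero.mpr (normSq_pos_of_ne hw).ne'
  set R : ℂ := ((Complex.normSq (w 0) + Complex.normSq (w 1) : ℝ) : ℂ) with hRdef
  have hR' : R = w 0 * (starRingEnd ℂ) (w 0) + w 1 * (starRingEnd ℂ) (w 1) := by
    rw [hRdef]; push_cast; rw [Complex.mul_conj, Complex.mul_conj]
  refine ⟨((starRingEnd ℂ) (w 0) * y 0 + (starRingEnd ℂ) (w 1) * y 1) / R, fun t => ?_⟩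
  have hcol1 : ∀ i, (g * frame v t) i 1 = y i + t * w i := by
    intro i
    simp only [hy, hwdef, mul_apply, mulVec, dotProduct, Fin.sum_univ_two, frame, of_apply,
      cons_val', cons_val_zero, cons_val_one, cons_val_fin_one]
    ring
  have hcol0 : ∀ i, (g * frame v t) i 0 = w i := by
    intro i
    fin_cases i <;> simp [hwdef, mul_apply, frame]
  have e0 : frame w = fun t => !![w 0, -star (w 1) / R + t * w 0; w 1, star (w 0) / R + t * w 1] :=
    rfl
  rw [e0]
  ext i j
  fin_cases i <;> fin_cases j
  · simpa using hcol0 0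
  · simp only [Fin.zero_eta, Fin.mk_one, hcol1, of_apply, cons_val', cons_val_zero, cons_val_one,
      cons_val_fin_one, Complex.star_def]
    field_simp
    linear_combination (y 0) * hR' - (starRingEnd ℂ) (w 1) * hdet
  · simpa using hcol0 1
  · simp only [Fin.mk_one, hcol1, of_apply, cons_val', cons_val_one, cons_val_fin_one,
      Complex.star_def]
    field_simp
    linear_combination (y 1) * hR' + (starRingEnd ℂ) (w 0) * hdet

/-! ### The radial law -/

open Set in
/-- Area formula for rotation-invariant functions on `ℂ`, in the variable `|z|²`. -/
lemma lintegral_normSq {h : ℝ → ENNReal} (hh : Measurable h) :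
    ∫⁻ z : ℂ, h (Complex.normSq z) = ENNReal.ofReal Real.pi * ∫⁻ x in Ioi (0 : ℝ), h x := by
  have hns : ∀ p : ℝ × ℝ, Complex.normSq (Complex.polarCoord.symm p) = p.1 ^ 2 := by
    intro p
    rw [Complex.normSq_eq_norm_sq, Complex.norm_polarCoord_symm, sq_abs]
  have hsq : ∫⁻ x in Ioi (0 : ℝ), h x
      = 2 * ∫⁻ r in Ioi (0 : ℝ), ENNReal.ofReal r * h (r ^ 2) := by
    have himg : (fun r : ℝ => r ^ 2) '' Ioi 0 = Ioi 0 := by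
      ext x
      constructor
      · rintro ⟨r, hr, rfl⟩
        exact pow_pos (show (0 : ℝ) < r from hr) 2
      · intro hx
        exact ⟨√x, Real.sqrt_pos.mpr hx, Real.sq_sqrt (le_of_lt hx)⟩
    have hinj : InjOn (fun r : ℝ => r ^ 2) (Ioi 0) := fun a ha b hb hab =>
      (pow_left_inj₀ (le_of_lt ha) (le_of_lt hb) two_ne_zero).mp hab
    have hder : ∀ x ∈ Ioi (0 : ℝ), HasDerivWithinAt (fun r : ℝ => r ^ 2) (2 * x) (Ioi 0) x := by
      intro x _
      simpa using (hasDerivAt_pow 2 x).hasDerivWithinAt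
    have := lintegral_image_eq_lintegral_abs_deriv_mul measurableSet_Ioi hder hinj h
    rw [himg] at this
    rw [this, ← lintegral_const_mul _ (by fun_prop)]
    refine setLIntegral_congr_fun measurableSet_Ioi fun r hr => ?_
    have hr' : (0 : ℝ) < r := hr
    rw [abs_of_pos (by positivity), ENNReal.ofReal_mul (by norm_num), mul_assoc]
    simp
  rw [← Complex.lintegral_comp_polarCoord_symm]
  simp only [hns, smul_eq_mul]
  rw [polarCoord_target, Measure.volume_eq_prod, ← Measure.prod_restrict,
    lintegral_prod _ (by fun_prop)]
  simp only [lintegral_const, Measure.restrict_apply MeasurableSet.univ, univ_inter,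
    Real.volume_Ioo]
  rw [lintegral_mul_const _ (by fun_prop), hsq, mul_comm, ← mul_assoc]
  congr 1
  rw [show Real.pi - -Real.pi = Real.pi * 2 by ring, ENNReal.ofReal_mul Real.pi_pos.le]
  simp

open Set in
/-- Integrating first over the variable that the integrand does not depend on leaves the length
of the slices of the domain. -/
lemma lintegral_slice {q : ℝ → ENNReal} (hq : Measurable q) {T : ℝ → Set ℝ} {A : Set ℝ}
    (hT : MeasurableSet {p : ℝ × ℝ | p.2 ∈ T p.1}) :
    ∫⁻ a in A, ∫⁻ s in T a, q s = ∫⁻ s, q s * volume {a | a ∈ A ∧ s ∈ T a} := by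
  have hTa : ∀ a, MeasurableSet (T a) := fun a => measurable_prodMk_left hT
  have h1 : ∀ a, ∫⁻ s in T a, q s = ∫⁻ s, {p : ℝ × ℝ | p.2 ∈ T p.1}.indicator
      (fun p => q p.2) (a, s) := by
    intro a
    rw [← lintegral_indicator (hTa a)]
    rfl
  have hm : Measurable ({p : ℝ × ℝ | p.2 ∈ T p.1}.indicator (fun p => q p.2)) :=
    (hq.comp measurable_snd).indicator hT
  simp only [h1]
  rw [lintegral_lintegral_swap (f := fun a s => {p : ℝ × ℝ | p.2 ∈ T p.1}.indicator
      (fun p => q p.2) (a, s)) hm.aemeasurable]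
  refine lintegral_congr fun s => ?_
  have hTs : MeasurableSet {a | s ∈ T a} := measurable_prodMk_right hT
  have h2 : ∀ a, {p : ℝ × ℝ | p.2 ∈ T p.1}.indicator (fun p => q p.2) (a, s)
      = {a | s ∈ T a}.indicator (fun _ => q s) a := fun a => rfl
  simp only [h2]
  rw [lintegral_indicator hTs, setLIntegral_const, Measure.restrict_apply hTs]
  congr 2
  ext a
  exact and_comm

open Set in
/-- Increasing affine substitution on a half-line. -/
lemma setLIntegral_affine (h : ℝ → ENNReal) (c : ℝ) {m : ℝ} (hm : 0 < m) :
    ∫⁻ s in Ioi c, h s = ∫⁻ y in Ioi (0 : ℝ), ENNReal.ofReal m * h (c + m * y) := by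
  have himg : (fun y : ℝ => c + m * y) '' Ioi 0 = Ioi c := by
    ext s
    constructor
    · rintro ⟨y, hy, rfl⟩
      have : 0 < m * y := mul_pos hm hy
      simpa using this
    · intro hs
      refine ⟨(s - c) / m, div_pos (sub_pos.mpr hs) hm, ?_⟩
      field_simp
      ring
  have hinj : InjOn (fun y : ℝ => c + m * y) (Ioi 0) := fun a _ b _ hab =>
    mul_left_cancel₀ hm.ne' (add_left_cancel hab)
  have hder : ∀ x ∈ Ioi (0 : ℝ), HasDerivWithinAt (fun y : ℝ => c + m * y) m (Ioi 0) x := by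
    intro x _
    simpa using (((hasDerivAt_id x).const_mul m).const_add c).hasDerivWithinAt
  have := lintegral_image_eq_lintegral_abs_deriv_mul measurableSet_Ioi hder hinj h
  rw [himg, abs_of_pos hm] at this
  exact this

open Set in
/-- Area formula for rotation-invariant functions on `ℂ²`, in the variable `|v|²`. -/
lemma lintegral_normSq_add {q : ℝ → ENNReal} (hq : Measurable q) :
    ∫⁻ v : Fin 2 → ℂ, q (Complex.normSq (v 0) + Complex.normSq (v 1))
      = ENNReal.ofReal Real.pi * (ENNReal.ofReal Real.pi
        * ∫⁻ x in Ioi (0 : ℝ), ENNReal.ofReal x * q x) := by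
  have hc : Measurable Complex.normSq := Complex.continuous_normSq.measurable
  have h1 := (volume_preserving_finTwoArrow ℂ).lintegral_comp
    (f := fun p : ℂ × ℂ => q (Complex.normSq p.1 + Complex.normSq p.2)) (by fun_prop)
  have h2 : ∫⁻ v : Fin 2 → ℂ, q (Complex.normSq (v 0) + Complex.normSq (v 1))
      = ∫⁻ p : ℂ × ℂ, q (Complex.normSq p.1 + Complex.normSq p.2) := h1
  rw [h2, Measure.volume_eq_prod, lintegral_prod _ (by fun_prop)]
  have h3 : ∀ x : ℂ, ∫⁻ y : ℂ, q (Complex.normSq x + Complex.normSq y)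
      = ENNReal.ofReal Real.pi * ∫⁻ s in Ioi (Complex.normSq x), q s := by
    intro x
    rw [lintegral_normSq (h := fun b => q (Complex.normSq x + b)) (by fun_prop),
      setLIntegral_affine q _ one_pos]
    simp
  simp only [h3]
  have hmeas : Measurable fun a : ℝ => ∫⁻ s in Ioi a, q s :=
    Antitone.measurable fun a b hab => lintegral_mono_set (Ioi_subset_Ioi hab)
  have hmeas' : Measurable fun x : ℂ => ∫⁻ s in Ioi (Complex.normSq x), q s := hmeas.comp hc
  rw [lintegral_const_mul _ hmeas', lintegral_normSq hmeas]
  congr 2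
  have hT : MeasurableSet {p : ℝ × ℝ | p.2 ∈ Ioi p.1} :=
    measurableSet_lt measurable_fst measurable_snd
  rw [lintegral_slice (T := fun a => Ioi a) hq hT,
    ← lintegral_indicator measurableSet_Ioi]
  refine lintegral_congr fun s => ?_
  have : {a : ℝ | a ∈ Ioi 0 ∧ s ∈ Ioi a} = Ioo 0 s := rfl
  rw [this, Real.volume_Ioo, sub_zero]
  by_cases hs : 0 < s
  · rw [indicator_of_mem (show s ∈ Ioi 0 from hs), mul_comm]
  · rw [indicator_of_notMem (show s ∉ Ioi 0 from hs), ENNReal.ofReal_of_nonpos (not_lt.mp hs),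
      mul_zero]

/-- For `η > 0` the inequality `x + x⁻¹ < 2 cosh η` says that `x` lies in an interval of length
`2 sinh η`. -/
lemma add_inv_lt_two_cosh_iff {x η : ℝ} (hη : 0 < η) :
    (0 < x ∧ x + x⁻¹ < 2 * Real.cosh η) ↔ (Real.exp (-η) < x ∧ x < Real.exp η) := by
  have he : Real.exp (-η) * Real.exp η = 1 := by rw [← Real.exp_add]; simp
  have hlt : Real.exp (-η) < Real.exp η := Real.exp_lt_exp.mpr (by linarith)
  have hp := Real.exp_pos (-η)
  have key : 0 < x → x * (2 * Real.cosh η - (x + x⁻¹))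
      = (x - Real.exp (-η)) * (Real.exp η - x) := by
    intro hx
    rw [Real.cosh_eq]
    field_simp
    linear_combination he
  constructor
  · rintro ⟨hx, h⟩
    have h1 : 0 < (x - Real.exp (-η)) * (Real.exp η - x) := by
      rw [← key hx]; exact mul_pos hx (by linarith)
    rcases pos_and_pos_or_neg_and_neg_of_mul_pos h1 with h | h
    · constructor <;> linarith [h.1, h.2]
    · linarith [h.1, h.2]
  · rintro ⟨h1, h2⟩
    have hx : 0 < x := hp.trans h1
    have h3 : 0 < x * (2 * Real.cosh η - (x + x⁻¹)) := by
      rw [key hx]; exact mul_pos (by linarith) (by linarith)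
    exact ⟨hx, by linarith [(mul_pos_iff_of_pos_left hx).mp h3]⟩

open Set in
/-- Substitution `s = 2 cosh η`. -/
lemma setLIntegral_two_cosh (g : ℝ → ENNReal) :
    ∫⁻ s in Ioi (2 : ℝ), g s
      = ∫⁻ η in Ioi (0 : ℝ), ENNReal.ofReal (2 * Real.sinh η) * g (2 * Real.cosh η) := by
  have himg : (fun η : ℝ => 2 * Real.cosh η) '' Ioi 0 = Ioi 2 := by
    ext s
    constructor
    · rintro ⟨η, hη, rfl⟩
      have : 1 < Real.cosh η := Real.one_lt_cosh.mpr (ne_of_gt hη)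
      simp only [mem_Ioi]
      linarith
    · intro hs
      have hs' : 1 < s / 2 := by rw [mem_Ioi] at hs; linarith
      refine ⟨Real.arcosh (s / 2), Real.arcosh_pos hs', ?_⟩
      simp only [Real.cosh_arcosh hs'.le]
      ring
  have hinj : InjOn (fun η : ℝ => 2 * Real.cosh η) (Ioi 0) := by
    intro a ha b hb hab
    have hab' : Real.cosh a = Real.cosh b := mul_left_cancel₀ two_ne_zero hab
    rw [← Real.arcosh_cosh (le_of_lt ha), hab', Real.arcosh_cosh (le_of_lt hb)]
  have hder : ∀ x ∈ Ioi (0 : ℝ), HasDerivWithinAt (fun η : ℝ => 2 * Real.cosh η)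
      (2 * Real.sinh x) (Ioi 0) x := fun x _ =>
    ((Real.hasDerivAt_cosh x).const_mul 2).hasDerivWithinAt
  have := lintegral_image_eq_lintegral_abs_deriv_mul measurableSet_Ioi hder hinj g
  rw [himg] at this
  rw [this]
  refine setLIntegral_congr_fun measurableSet_Ioi fun η hη => ?_
  rw [abs_of_pos (mul_pos two_pos (Real.sinh_pos_iff.mpr hη))]

open Set in
lemma lintegral_even {g : ℝ → ENNReal} (hg : ∀ x, g (-x) = g x) :
    ∫⁻ x, g x = 2 * ∫⁻ x in Ioi (0 : ℝ), g x := by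
  have h1 : ∫⁻ x in Iio (0 : ℝ), g x = ∫⁻ x in Ioi (0 : ℝ), g x := by
    rw [← lintegral_indicator measurableSet_Iio, ← lintegral_indicator measurableSet_Ioi,
      ← lintegral_neg_eq_self]
    refine lintegral_congr fun x => ?_
    simp only [indicator, mem_Iio, mem_Ioi, neg_lt_zero, hg]
  rw [← lintegral_add_compl g (measurableSet_Iio (a := (0 : ℝ))), compl_Iio,
    setLIntegral_congr Ioi_ae_eq_Ici.symm, h1, two_mul]

open Set in
/-- In the coordinates `frame v t`, Lebesgue measure on `ℂ² × ℂ` induces on the radial variable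
`hsq = 2 cosh η` a multiple of the measure `sinh² η dη`. -/
lemma lintegral_hsq_frame {h : ℝ → ENNReal} (hh : Measurable h) :
    ∫⁻ p : (Fin 2 → ℂ) × ℂ, h (hsq (frame p.1 p.2))
      = 2 * ENNReal.ofReal Real.pi ^ 3
        * ∫⁻ η, ENNReal.ofReal (Real.sinh η ^ 2) * h (2 * Real.cosh η) := by
  have hc : Measurable Complex.normSq := Complex.continuous_normSq.measurable
  set r : (Fin 2 → ℂ) → ℝ := fun v => Complex.normSq (v 0) + Complex.normSq (v 1) with hr
  have hrm : Measurable r := by fun_prop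
  -- replace `hsq` by its explicit value, valid off the null set `v = 0`
  have h1 : ∫⁻ p : (Fin 2 → ℂ) × ℂ, h (hsq (frame p.1 p.2))
      = ∫⁻ p : (Fin 2 → ℂ) × ℂ, h (r p.1 + (r p.1)⁻¹ + r p.1 * Complex.normSq p.2) := by
    refine lintegral_congr_ae ?_
    have hne : ∀ᵐ v : Fin 2 → ℂ, v ≠ 0 := Measure.ae_ne volume 0
    have hne' : ∀ᵐ p : (Fin 2 → ℂ) × ℂ, p.1 ≠ 0 :=
      Measure.quasiMeasurePreserving_fst.ae hne
    filter_upwards [hne'] with p hp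
    rw [hsq_frame hp]
  have h2 : ∀ x ∈ Ioi (0 : ℝ), ENNReal.ofReal x * (ENNReal.ofReal Real.pi
      * ∫⁻ y in Ioi (0 : ℝ), h (x + x⁻¹ + x * y))
      = ENNReal.ofReal Real.pi * ∫⁻ s in Ioi (x + x⁻¹), h s := by
    intro x hx
    rw [setLIntegral_affine h _ hx, lintegral_const_mul _ (by fun_prop)]
    ring
  have hq : Measurable fun x : ℝ => ENNReal.ofReal Real.pi
      * ∫⁻ y in Ioi (0 : ℝ), h (x + x⁻¹ + x * y) := by
    refine Measurable.const_mul ?_ _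
    exact Measurable.lintegral_prod_right' (f := fun p : ℝ × ℝ => h (p.1 + p.1⁻¹ + p.1 * p.2))
      (by fun_prop)
  rw [h1, Measure.volume_eq_prod, lintegral_prod _ (by fun_prop)]
  have h3 : ∀ v, ∫⁻ t : ℂ, h (r v + (r v)⁻¹ + r v * Complex.normSq t)
      = ENNReal.ofReal Real.pi * ∫⁻ y in Ioi (0 : ℝ), h (r v + (r v)⁻¹ + r v * y) := fun v =>
    lintegral_normSq (h := fun y => h (r v + (r v)⁻¹ + r v * y)) (by fun_prop)
  simp only [h3]
  rw [lintegral_normSq_add hq, setLIntegral_congr_fun measurableSet_Ioi h2]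
  have hT : MeasurableSet {p : ℝ × ℝ | p.2 ∈ Ioi (p.1 + p.1⁻¹)} :=
    measurableSet_lt (by fun_prop) measurable_snd
  have hmeas : Measurable fun x : ℝ => ∫⁻ s in Ioi (x + x⁻¹), h s :=
    Measurable.comp (g := fun a : ℝ => ∫⁻ s in Ioi a, h s)
      (Antitone.measurable fun a b hab => lintegral_mono_set (Ioi_subset_Ioi hab))
      (by fun_prop)
  rw [lintegral_const_mul _ hmeas,
    lintegral_slice (T := fun x => Ioi (x + x⁻¹)) hh hT]
  -- the slices are empty for `s ≤ 2`, since `x + x⁻¹ ≥ 2`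
  have h4 : ∫⁻ s, h s * volume {a : ℝ | a ∈ Ioi 0 ∧ s ∈ Ioi (a + a⁻¹)}
      = ∫⁻ s in Ioi (2 : ℝ), h s * volume {a : ℝ | a ∈ Ioi 0 ∧ s ∈ Ioi (a + a⁻¹)} := by
    rw [← lintegral_indicator measurableSet_Ioi]
    refine lintegral_congr fun s => ?_
    by_cases hs : 2 < s
    · rw [indicator_of_mem (show s ∈ Ioi 2 from hs)]
    · rw [indicator_of_notMem (show s ∉ Ioi 2 from hs)]
      have : {a : ℝ | a ∈ Ioi 0 ∧ s ∈ Ioi (a + a⁻¹)} = ∅ := by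
        rw [eq_empty_iff_forall_notMem]
        rintro a ⟨ha, has⟩
        have ha' : 0 < a := ha
        have has' : a + a⁻¹ < s := has
        have : 0 ≤ (a - 1) ^ 2 * a⁻¹ := by positivity
        have h5 : (a - 1) ^ 2 * a⁻¹ = a + a⁻¹ - 2 := by field_simp; ring
        linarith
      rw [this, measure_empty, mul_zero]
  have h6 : ∀ η ∈ Ioi (0 : ℝ), ENNReal.ofReal (2 * Real.sinh η) * (h (2 * Real.cosh η)
      * volume {a : ℝ | a ∈ Ioi 0 ∧ 2 * Real.cosh η ∈ Ioi (a + a⁻¹)})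
      = 4 * (ENNReal.ofReal (Real.sinh η ^ 2) * h (2 * Real.cosh η)) := by
    intro η hη
    have hset : {a : ℝ | a ∈ Ioi 0 ∧ 2 * Real.cosh η ∈ Ioi (a + a⁻¹)}
        = Ioo (Real.exp (-η)) (Real.exp η) := by
      ext a
      exact add_inv_lt_two_cosh_iff hη
    have hlen : Real.exp η - Real.exp (-η) = 2 * Real.sinh η := by rw [Real.sinh_eq]; ring
    have hs : 0 < Real.sinh η := Real.sinh_pos_iff.mpr hη
    rw [hset, Real.volume_Ioo, hlen, ENNReal.ofReal_mul (by norm_num : (0 : ℝ) ≤ 2),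
      ENNReal.ofReal_pow hs.le, ENNReal.ofReal_ofNat]
    ring
  rw [h4, setLIntegral_two_cosh, setLIntegral_congr_fun measurableSet_Ioi h6,
    lintegral_const_mul _ (by fun_prop), lintegral_even (fun x => by simp)]
  ring

/-! ### Invariance of integrals over `SU(2)` and over the frame coordinates -/

instance : SecondCountableTopology (Matrix (Fin 2) (Fin 2) ℂ) :=
  inferInstanceAs (SecondCountableTopology (Fin 2 → Fin 2 → ℂ))

lemma continuous_dEta : Continuous dEta := by
  refine continuous_matrix fun i j => ?_
  fin_cases i <;> fin_cases j <;> simp [dEta] <;> fun_prop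

lemma continuous_hsq : Continuous hsq := by
  unfold hsq
  fun_prop

lemma measurable_frame : Measurable fun p : (Fin 2 → ℂ) × ℂ => frame p.1 p.2 := by
  have hc : Continuous fun q : ℂ × ℂ × ℂ × ℂ =>
      (!![q.1, q.2.1; q.2.2.1, q.2.2.2] : Matrix (Fin 2) (Fin 2) ℂ) := by
    refine continuous_matrix fun i j => ?_
    fin_cases i <;> fin_cases j <;> simp <;> fun_prop
  have hn : Measurable Complex.normSq := Complex.continuous_normSq.measurable
  have hs : Measurable (star : ℂ → ℂ) := continuous_star.measurable
  refine hc.measurable.comp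
    (g := fun q : ℂ × ℂ × ℂ × ℂ => (!![q.1, q.2.1; q.2.2.1, q.2.2.2] : Matrix _ _ ℂ))
    (f := fun p : (Fin 2 → ℂ) × ℂ => (p.1 0,
      -star (p.1 1) / (Complex.normSq (p.1 0) + Complex.normSq (p.1 1) : ℝ) + p.2 * p.1 0,
      p.1 1,
      star (p.1 0) / (Complex.normSq (p.1 0) + Complex.normSq (p.1 1) : ℝ) + p.2 * p.1 1)) ?_
  fun_prop

lemma measurable_const_mul_matrix (g : Matrix (Fin 2) (Fin 2) ℂ) : Measurable fun x => g * x :=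
  (continuous_const.mul continuous_id).measurable

section Haar

variable {μ : Measure (Matrix (Fin 2) (Fin 2) ℂ)}

lemma lintegral_SU2_mul_left (hinv : ∀ u ∈ SU2, Measure.map (fun x => u * x) μ = μ)
    {f : Matrix (Fin 2) (Fin 2) ℂ → ENNReal} (hf : Measurable f)
    {u : Matrix (Fin 2) (Fin 2) ℂ} (hu : u ∈ SU2) : ∫⁻ x, f (u * x) ∂μ = ∫⁻ x, f x ∂μ := by
  conv_rhs => rw [← hinv u hu]
  rw [lintegral_map hf (measurable_const_mul_matrix u)]

/-- A left-invariant probability measure on `SU(2)` is invariant under inversion: compute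
`∫∫ f (y⁻¹ x)` in both orders. -/
lemma lintegral_SU2_conjTranspose [IsProbabilityMeasure μ] (hsupp : ∀ᵐ u ∂μ, u ∈ SU2)
    (hinv : ∀ u ∈ SU2, Measure.map (fun x => u * x) μ = μ)
    {f : Matrix (Fin 2) (Fin 2) ℂ → ENNReal} (hf : Measurable f) :
    ∫⁻ x, f xᴴ ∂μ = ∫⁻ x, f x ∂μ := by
  have hct : Measurable fun x : Matrix (Fin 2) (Fin 2) ℂ => xᴴ :=
    (continuous_id.matrix_conjTranspose).measurable
  have h1 : ∫⁻ y, ∫⁻ x, f (yᴴ * x) ∂μ ∂μ = ∫⁻ x, f x ∂μ := by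
    have : ∀ᵐ y ∂μ, ∫⁻ x, f (yᴴ * x) ∂μ = ∫⁻ x, f x ∂μ := by
      filter_upwards [hsupp] with y hy
      exact lintegral_SU2_mul_left hinv hf (SU2.conjTranspose_mem hy)
    rw [lintegral_congr_ae this, lintegral_const, measure_univ, mul_one]
  have h2 : ∫⁻ x, ∫⁻ y, f (yᴴ * x) ∂μ ∂μ = ∫⁻ x, f xᴴ ∂μ := by
    have : ∀ᵐ x ∂μ, ∫⁻ y, f (yᴴ * x) ∂μ = ∫⁻ y, f yᴴ ∂μ := by
      filter_upwards [hsupp] with x hx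
      have h := lintegral_SU2_mul_left hinv (hf.comp hct) (SU2.conjTranspose_mem hx)
      simpa [Function.comp_def, conjTranspose_mul] using h
    rw [lintegral_congr_ae this, lintegral_const, measure_univ, mul_one]
  rw [← h1, ← h2, lintegral_lintegral_swap]
  refine (hf.comp (Continuous.measurable ?_)).aemeasurable
  fun_prop

lemma lintegral_SU2_mul_right [IsProbabilityMeasure μ] (hsupp : ∀ᵐ u ∂μ, u ∈ SU2)
    (hinv : ∀ u ∈ SU2, Measure.map (fun x => u * x) μ = μ)
    {f : Matrix (Fin 2) (Fin 2) ℂ → ENNReal} (hf : Measurable f)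
    {u : Matrix (Fin 2) (Fin 2) ℂ} (hu : u ∈ SU2) : ∫⁻ x, f (x * u) ∂μ = ∫⁻ x, f x ∂μ := by
  have hct : Measurable fun x : Matrix (Fin 2) (Fin 2) ℂ => xᴴ :=
    (continuous_id.matrix_conjTranspose).measurable
  have hr : Measurable fun x : Matrix (Fin 2) (Fin 2) ℂ => x * u :=
    (continuous_id.mul continuous_const).measurable
  calc ∫⁻ x, f (x * u) ∂μ = ∫⁻ x, f (xᴴ * u) ∂μ :=
        (lintegral_SU2_conjTranspose hsupp hinv (hf.comp hr)).symm
    _ = ∫⁻ x, f (uᴴ * x)ᴴ ∂μ := by simp [conjTranspose_mul]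
    _ = ∫⁻ x, f xᴴ ∂μ :=
        lintegral_SU2_mul_left hinv (hf.comp hct) (SU2.conjTranspose_mem hu)
    _ = ∫⁻ x, f x ∂μ := lintegral_SU2_conjTranspose hsupp hinv hf

end Haar

/-- Left translations by `SL(2,ℂ)` preserve the image of Lebesgue measure under `frame`. -/
lemma lintegral_frame_mul_left {f : Matrix (Fin 2) (Fin 2) ℂ → ENNReal} (hf : Measurable f)
    {g : Matrix (Fin 2) (Fin 2) ℂ} (hg : g.det = 1) :
    ∫⁻ p : (Fin 2 → ℂ) × ℂ, f (g * frame p.1 p.2)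
      = ∫⁻ p : (Fin 2 → ℂ) × ℂ, f (frame p.1 p.2) := by
  have hfr : Measurable fun p : (Fin 2 → ℂ) × ℂ => f (frame p.1 p.2) := hf.comp measurable_frame
  have hgfr : Measurable fun p : (Fin 2 → ℂ) × ℂ => f (g * frame p.1 p.2) :=
    hf.comp ((measurable_const_mul_matrix g).comp measurable_frame)
  set T : (Fin 2 → ℂ) →ₗ[ℝ] (Fin 2 → ℂ) := (Matrix.toLin' g).restrictScalars ℝ with hT
  have hdet : LinearMap.det T = 1 := by
    rw [hT, LinearMap.det_restrictScalars, LinearMap.det_toLin', hg, map_one]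
  have hmap : Measure.map T (volume : Measure (Fin 2 → ℂ)) = volume := by
    rw [Measure.map_linearMap_addHaar_eq_smul_addHaar volume (by rw [hdet]; exact one_ne_zero),
      hdet]
    simp
  have hTm : Measurable T := T.continuous_of_finiteDimensional.measurable
  rw [Measure.volume_eq_prod, lintegral_prod _ hgfr.aemeasurable, lintegral_prod _ hfr.aemeasurable]
  have hinner : ∀ᵐ v : Fin 2 → ℂ, ∫⁻ t, f (g * frame v t) = ∫⁻ t, f (frame (T v) t) := by
    have hne : ∀ᵐ v : Fin 2 → ℂ, v ≠ 0 := Measure.ae_ne volume 0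
    filter_upwards [hne] with v hv
    obtain ⟨c, hc⟩ := exists_mul_frame hg hv
    simp only [hc]
    exact lintegral_add_right_eq_self (fun t => f (frame (g *ᵥ v) t)) c
  rw [lintegral_congr_ae hinner]
  have hF : Measurable fun v : Fin 2 → ℂ => ∫⁻ t, f (frame v t) :=
    Measurable.lintegral_prod_right' hfr
  conv_rhs => rw [← hmap]
  rw [lintegral_map hF hTm]

/-! ### The Cartan integration formula -/

section Cartan

variable {μ : Measure (Matrix (Fin 2) (Fin 2) ℂ)} [IsProbabilityMeasure μ]

/-- The two-sided average of `f` over `SU(2)`-translates of `x`. -/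
def biAverage (μ : Measure (Matrix (Fin 2) (Fin 2) ℂ)) (f : Matrix (Fin 2) (Fin 2) ℂ → ENNReal)
    (x : Matrix (Fin 2) (Fin 2) ℂ) : ENNReal :=
  ∫⁻ k, ∫⁻ u, f (k * x * u) ∂μ ∂μ

lemma measurable_rightAverage {f : Matrix (Fin 2) (Fin 2) ℂ → ENNReal} (hf : Measurable f) :
    Measurable fun x => ∫⁻ u, f (x * u) ∂μ := by
  refine Measurable.lintegral_prod_right'
    (f := fun p : Matrix (Fin 2) (Fin 2) ℂ × Matrix (Fin 2) (Fin 2) ℂ => f (p.1 * p.2)) ?_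
  exact hf.comp (Continuous.measurable (by fun_prop))

lemma measurable_biAverage {f : Matrix (Fin 2) (Fin 2) ℂ → ENNReal} (hf : Measurable f) :
    Measurable (biAverage μ f) := by
  refine Measurable.lintegral_prod_right'
    (f := fun p : Matrix (Fin 2) (Fin 2) ℂ × Matrix (Fin 2) (Fin 2) ℂ =>
      ∫⁻ u, f (p.2 * p.1 * u) ∂μ) ?_
  exact (measurable_rightAverage hf).comp
    (f := fun p : Matrix (Fin 2) (Fin 2) ℂ × Matrix (Fin 2) (Fin 2) ℂ => p.2 * p.1)
    (Continuous.measurable (by fun_prop))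

lemma biAverage_mul_mul (hsupp : ∀ᵐ u ∂μ, u ∈ SU2)
    (hinv : ∀ u ∈ SU2, Measure.map (fun x => u * x) μ = μ)
    {f : Matrix (Fin 2) (Fin 2) ℂ → ENNReal} (hf : Measurable f)
    {u v : Matrix (Fin 2) (Fin 2) ℂ} (hu : u ∈ SU2) (hv : v ∈ SU2)
    (x : Matrix (Fin 2) (Fin 2) ℂ) : biAverage μ f (u * x * v) = biAverage μ f x := by
  have h1 : ∀ k, ∫⁻ w, f (k * (u * x * v) * w) ∂μ = ∫⁻ w, f ((k * u) * x * w) ∂μ := by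
    intro k
    have h := lintegral_SU2_mul_left hinv
      (f := fun w => f ((k * u) * x * w)) (hf.comp (Continuous.measurable (by fun_prop))) hv
    simpa only [mul_assoc] using h
  unfold biAverage
  simp only [h1]
  refine lintegral_SU2_mul_right hsupp hinv (f := fun k => ∫⁻ w, f (k * x * w) ∂μ) ?_ hu
  exact (measurable_rightAverage hf).comp (f := fun k => k * x)
    (Continuous.measurable (by fun_prop))

/-- On `SL(2,ℂ)` a two-sided average is a function of the squared Hilbert–Schmidt norm. -/
lemma biAverage_eq_radial (hsupp : ∀ᵐ u ∂μ, u ∈ SU2)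
    (hinv : ∀ u ∈ SU2, Measure.map (fun x => u * x) μ = μ)
    {f : Matrix (Fin 2) (Fin 2) ℂ → ENNReal} (hf : Measurable f)
    {x : Matrix (Fin 2) (Fin 2) ℂ} (hx : x.det = 1) :
    biAverage μ f x = biAverage μ f (dEta (Real.arcosh (hsq x / 2))) := by
  obtain ⟨u, hu, η, v, hv, rfl⟩ := exists_cartan hx
  rw [hsq_unitary_mul_mul hu hv, biAverage_mul_mul hsupp hinv hf hu hv, hsq_dEta,
    mul_div_cancel_left₀ _ two_ne_zero, ← Real.cosh_abs, Real.arcosh_cosh (abs_nonneg η)]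
  rcases abs_cases η with ⟨h, _⟩ | ⟨h, _⟩
  · rw [h]
  · obtain ⟨u', hu', v', hv', hw⟩ := exists_weyl η
    rw [h, hw, biAverage_mul_mul hsupp hinv hf hu' hv']

/-- Both sides are a constant multiple of the Haar integral of `f`: the left one is visibly
invariant under `SL(2,ℂ)`, the right one is its expression in Cartan coordinates. -/
lemma lintegral_frame_eq_cartan (hsupp : ∀ᵐ u ∂μ, u ∈ SU2)
    (hinv : ∀ u ∈ SU2, Measure.map (fun x => u * x) μ = μ)
    {f : Matrix (Fin 2) (Fin 2) ℂ → ENNReal} (hf : Measurable f) :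
    ∫⁻ p : (Fin 2 → ℂ) × ℂ, ∫⁻ u, f (frame p.1 p.2 * u) ∂μ
      = 2 * ENNReal.ofReal Real.pi ^ 3
        * ∫⁻ η, ENNReal.ofReal (Real.sinh η ^ 2) * biAverage μ f (dEta η) := by
  have hR := measurable_rightAverage (μ := μ) hf
  -- averaging over left translates changes nothing
  have h1 : ∫⁻ p : (Fin 2 → ℂ) × ℂ, ∫⁻ u, f (frame p.1 p.2 * u) ∂μ
      = ∫⁻ p : (Fin 2 → ℂ) × ℂ, biAverage μ f (frame p.1 p.2) := by
    have h : ∀ᵐ k ∂μ, ∫⁻ p : (Fin 2 → ℂ) × ℂ, ∫⁻ u, f (k * frame p.1 p.2 * u) ∂μ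
        = ∫⁻ p : (Fin 2 → ℂ) × ℂ, ∫⁻ u, f (frame p.1 p.2 * u) ∂μ := by
      filter_upwards [hsupp] with k hk
      exact lintegral_frame_mul_left (f := fun x => ∫⁻ u, f (x * u) ∂μ) hR hk.2
    have h' := lintegral_congr_ae h
    rw [lintegral_const, measure_univ, mul_one] at h'
    rw [← h', lintegral_lintegral_swap]
    · rfl
    · refine Measurable.aemeasurable ?_
      refine hR.comp (f := fun q : Matrix (Fin 2) (Fin 2) ℂ × ((Fin 2 → ℂ) × ℂ) =>
        q.1 * frame q.2.1 q.2.2) ?_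
      have hmul : Measurable fun q : Matrix (Fin 2) (Fin 2) ℂ × Matrix (Fin 2) (Fin 2) ℂ =>
        q.1 * q.2 := Continuous.measurable (by fun_prop)
      exact hmul.comp (measurable_fst.prodMk (measurable_frame.comp measurable_snd))
  have h2 : ∫⁻ p : (Fin 2 → ℂ) × ℂ, biAverage μ f (frame p.1 p.2)
      = ∫⁻ p : (Fin 2 → ℂ) × ℂ,
        biAverage μ f (dEta (Real.arcosh (hsq (frame p.1 p.2) / 2))) := by
    refine lintegral_congr_ae ?_
    have hne : ∀ᵐ v : Fin 2 → ℂ, v ≠ 0 := Measure.ae_ne volume 0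
    have hne' : ∀ᵐ p : (Fin 2 → ℂ) × ℂ, p.1 ≠ 0 :=
      Measure.quasiMeasurePreserving_fst.ae hne
    filter_upwards [hne'] with p hp
    exact biAverage_eq_radial hsupp hinv hf (det_frame hp _)
  have harcosh : Measurable Real.arcosh := by
    unfold Real.arcosh
    fun_prop
  have hmeas : Measurable fun s : ℝ => biAverage μ f (dEta (Real.arcosh (s / 2))) :=
    (measurable_biAverage hf).comp
      (continuous_dEta.measurable.comp (harcosh.comp (measurable_id.div_const 2)))
  rw [h1, h2, lintegral_hsq_frame hmeas]
  congr 1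
  refine lintegral_congr fun η => ?_
  rw [biAverage_eq_radial hsupp hinv hf (det_dEta η), hsq_dEta]

end Cartan

/-- Cartan (KAK) integration formula for SL(2,ℂ): the pushforward of
μ_K ⊗ sinh²(η)dη ⊗ μ_K under (u₁, η, u₂) ↦ u₁ d(η) u₂, where μ_K is the
normalized Haar probability measure of SU(2), is a left-invariant (Haar)
measure on SL(2,ℂ). -/
theorem cartan_pushforward_is_left_invariant
    (μK : Measure (Matrix (Fin 2) (Fin 2) ℂ))
    (hKprob : μK Set.univ = 1)
    (hKsupp : μK SU2ᶜ = 0)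
    (hKinv : ∀ u ∈ SU2, Measure.map (fun x => u * x) μK = μK)
    (lam : Measure ℝ)
    (hlam : lam = volume.withDensity (fun η => ENNReal.ofReal (Real.sinh η ^ 2)))
    (ν : Measure (Matrix (Fin 2) (Fin 2) ℂ))
    (hν : ν = Measure.map
      (fun p : Matrix (Fin 2) (Fin 2) ℂ × ℝ × Matrix (Fin 2) (Fin 2) ℂ =>
        p.1 * dEta p.2.1 * p.2.2)
      (μK.prod (lam.prod μK))) :
    ∀ g : Matrix (Fin 2) (Fin 2) ℂ, g.det = 1 →
      ∀ S : Set (Matrix (Fin 2) (Fin 2) ℂ), MeasurableSet S →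
        ν ((fun x => g * x) '' S) = ν S := by
  have : IsProbabilityMeasure μK := ⟨hKprob⟩
  have hsupp : ∀ᵐ u ∂μK, u ∈ SU2 := hKsupp
  have hsinh : Measurable fun η : ℝ => ENNReal.ofReal (Real.sinh η ^ 2) := by fun_prop
  have : SFinite lam := by rw [hlam]; infer_instance
  have hΦ : Continuous fun p : Matrix (Fin 2) (Fin 2) ℂ × ℝ × Matrix (Fin 2) (Fin 2) ℂ =>
      p.1 * dEta p.2.1 * p.2.2 := by
    have := continuous_dEta
    fun_prop
  have hν_int : ∀ f : Matrix (Fin 2) (Fin 2) ℂ → ENNReal, Measurable f →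
      ∫⁻ x, f x ∂ν = ∫⁻ η, ENNReal.ofReal (Real.sinh η ^ 2) * biAverage μK f (dEta η) := by
    intro f hf
    have hfΦ : Measurable fun p : Matrix (Fin 2) (Fin 2) ℂ × ℝ × Matrix (Fin 2) (Fin 2) ℂ =>
        f (p.1 * dEta p.2.1 * p.2.2) := hf.comp hΦ.measurable
    have hR := measurable_rightAverage (μ := μK) hf
    have hkη : Measurable fun q : Matrix (Fin 2) (Fin 2) ℂ × ℝ =>
        ∫⁻ u, f (q.1 * dEta q.2 * u) ∂μK := by
      have := continuous_dEta
      exact hR.comp (f := fun q : Matrix (Fin 2) (Fin 2) ℂ × ℝ => q.1 * dEta q.2)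
        (Continuous.measurable (by fun_prop))
    have hinner : ∀ k : Matrix (Fin 2) (Fin 2) ℂ,
        ∫⁻ q : ℝ × Matrix (Fin 2) (Fin 2) ℂ, f (k * dEta q.1 * q.2) ∂(lam.prod μK)
          = ∫⁻ η, ∫⁻ u, f (k * dEta η * u) ∂μK ∂lam := by
      intro k
      exact lintegral_prod _ (hfΦ.comp (measurable_prodMk_left (x := k))).aemeasurable
    rw [hν, lintegral_map hf hΦ.measurable, lintegral_prod _ hfΦ.aemeasurable]
    simp only [hinner]
    rw [lintegral_lintegral_swap hkη.aemeasurable, hlam,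
      lintegral_withDensity_eq_lintegral_mul _ hsinh
        (g := fun η => ∫⁻ k, ∫⁻ u, f (k * dEta η * u) ∂μK ∂μK)
        ((measurable_biAverage hf).comp continuous_dEta.measurable)]
    rfl
  have hC0 : 2 * ENNReal.ofReal Real.pi ^ 3 ≠ 0 := by
    simp [Real.pi_pos]
  have hCtop : 2 * ENNReal.ofReal Real.pi ^ 3 ≠ ⊤ :=
    ENNReal.mul_ne_top ENNReal.ofNat_ne_top (ENNReal.pow_ne_top ENNReal.ofReal_ne_top)
  have hinv : ∀ g : Matrix (Fin 2) (Fin 2) ℂ, g.det = 1 → Measure.map (fun x => g * x) ν = ν := by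
    intro g hg
    have hgm := measurable_const_mul_matrix g
    refine Measure.ext_of_lintegral _ fun f hf => ?_
    have hfg : Measurable fun x => f (g * x) := hf.comp hgm
    rw [lintegral_map hf hgm, hν_int _ hfg, hν_int _ hf]
    refine (ENNReal.mul_right_inj hC0 hCtop).mp ?_
    have h1 := lintegral_frame_eq_cartan hsupp hKinv hfg
    have h2 := lintegral_frame_eq_cartan hsupp hKinv hf
    have h3 := lintegral_frame_mul_left (measurable_rightAverage (μ := μK) hf) hg
    refine h1.symm.trans (Eq.trans ?_ h2)
    simpa only [mul_assoc] using h3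
  intro g hg S hS
  have hunit : IsUnit g.det := by rw [hg]; exact isUnit_one
  have hdet' : g⁻¹.det = 1 := by
    rw [det_nonsing_inv, hg, Ring.inverse_one]
  have himg : (fun x => g * x) '' S = (fun x => g⁻¹ * x) ⁻¹' S := by
    ext y
    constructor
    · rintro ⟨x, hx, rfl⟩
      simpa [nonsing_inv_mul_cancel_left g x hunit] using hx
    · intro hy
      exact ⟨g⁻¹ * y, hy, mul_nonsing_inv_cancel_left g y hunit⟩
  conv_rhs => rw [← hinv g⁻¹ hdet']
  rw [himg, Measure.map_apply (measurable_const_mul_matrix g⁻¹) hS]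

end
end
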